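/- Let Ω ⊆ ℝ² be a bounded measurable set, let L := sup over unit vectors θ ∈ ℝ² and s ∈ ℝ of μH[1]({x ∈ ℝ² : ⟪x, θ⟫ = s} ∩ Ω) be finite, let σ be a nonnegative measure on S¹ × ℝ, let η be a finite nonnegative measure on S¹, and let ρ : ℝ² → [0, ∞) be a bounded measurable function, such that the disintegration identity ∫_{S¹×ℝ} ( ∫_{{x : ⟪x,θ⟫ = s} ∩ Ω} ψ(x, s, θ) dμH[1](x) ) dσ(θ, s) = ∫_{S¹} ( ∫_Ω ψ(x, ⟪x, θ⟫, θ) ρ(x) dx ) dη(θ) holds for every nonnegative measurable ψ : ℝ² × ℝ × S¹ → [0, ∞]. Let p ∈ (1, ∞) with conjugate exponent p* (1/p + 1/p* = 1), let v : ℝ² → ℝ be measurable with ∫_Ω |v|^p dx < ∞, and let φ : S¹ × ℝ → ℝ be measurable with ∫ |φ|^{p*} dσ < ∞. Then the duality identity ∫_{S¹×ℝ} φ(θ, s) · ( ∫_{{x : ⟪x,θ⟫ = s} ∩ Ω} v(x) dμH[1](x) ) dσ(θ, s) = ∫_Ω v(x) · ρ(x) · ( ∫_{S¹} φ(θ, ⟪x,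 θ⟫) dη(θ) ) dx holds; that is, the dual operator of the undersampled Radon transform is given by (R* φ)(x) = ρ(x) ∫_{S¹} φ(θ, ⟪x, θ⟫) dη(θ). -/

import Mathlib

/-!
The disintegration identity says that two measures on incidence triples `(x, s, θ)` agree on
nonnegative functions; the duality formula is its extension to the signed function
`v x * φ (θ, s)`. Splitting into positive and negative parts gives this
(`integral_integral_eq_lintegral_sub`), provided that

* the line integrals `(θ, s) ↦ ∫⁻ g` are measurable, so that lower integrals against `σ` behave:
  each line is the isometric image of `ℝ` under `lineParam`, which turns `μH[1]` on it into
  Lebesgue measure and the line integral into a parametric integral over `ℝ`;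
* `|v| |φ|` is integrable: by Young's inequality it is at most `|v| ^ p + |φ| ^ q`. The first
  term is integrable by the disintegration identity, as `ρ` and `η` are bounded, and the second
  because every line meets `Ω` in length at most `L`.

Fubini's theorem on `η × (volume restricted to Ω)` then exchanges the remaining two integrals.
-/


open MeasureTheory
open scoped RealInnerProductSpace ENNReal NNReal

/-- The plane. -/
noncomputable abbrev Plane := EuclideanSpace ℝ (Fin 2)

/-- The unit circle `S¹` in the plane. -/
noncomputable abbrev UnitCircle : Set Plane := Metric.sphere (0 : Plane) 1

/-- An iterated integral of a signed function is the difference of the iterated lower integrals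
of its positive and negative parts. The measures `K a` need only be measurable in `a` in the
sense of `hK`, and no `s`-finiteness of `σ` is required. -/
lemma integral_integral_eq_lintegral_sub {α β : Type*} [MeasurableSpace α] [MeasurableSpace β]
    (σ : Measure α) (K : α → Measure β)
    (hK : ∀ g : α × β → ℝ≥0∞, Measurable g → Measurable fun a => ∫⁻ b, g (a, b) ∂K a)
    (f : α × β → ℝ) (hf : Measurable f)
    (hfin : ∫⁻ a, ∫⁻ b, ‖f (a, b)‖ₑ ∂K a ∂σ ≠ ∞) :
    ∫ a, ∫ b, f (a, b) ∂K a ∂σ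
      = (∫⁻ a, ∫⁻ b, ENNReal.ofReal (f (a, b)) ∂K a ∂σ).toReal
        - (∫⁻ a, ∫⁻ b, ENNReal.ofReal (-f (a, b)) ∂K a ∂σ).toReal := by
  have hP := hK (fun z => ENNReal.ofReal (f z)) hf.ennreal_ofReal
  have hN := hK (fun z => ENNReal.ofReal (-f z)) hf.neg.ennreal_ofReal
  have hE := hK (fun z => ‖f z‖ₑ) hf.enorm
  have hPle : ∀ a, ∫⁻ b, ENNReal.ofReal (f (a, b)) ∂K a ≤ ∫⁻ b, ‖f (a, b)‖ₑ ∂K a := fun a =>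
    lintegral_mono fun b => Real.ofReal_le_enorm _
  have hNle : ∀ a, ∫⁻ b, ENNReal.ofReal (-f (a, b)) ∂K a ≤ ∫⁻ b, ‖f (a, b)‖ₑ ∂K a := fun a =>
    lintegral_mono fun b => (Real.ofReal_le_enorm _).trans_eq (enorm_neg _)
  have hPfin := ne_top_of_le_ne_top hfin (lintegral_mono hPle)
  have hNfin := ne_top_of_le_ne_top hfin (lintegral_mono hNle)
  have hae : ∀ᵐ a ∂σ, ∫ b, f (a, b) ∂K a
      = (∫⁻ b, ENNReal.ofReal (f (a, b)) ∂K a).toReal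
        - (∫⁻ b, ENNReal.ofReal (-f (a, b)) ∂K a).toReal := by
    filter_upwards [ae_lt_top hE hfin] with a ha
    exact integral_eq_lintegral_pos_part_sub_lintegral_neg_part
      ⟨(hf.comp measurable_prodMk_left).aestronglyMeasurable, ha⟩
  rw [integral_congr_ae hae,
    integral_sub (integrable_toReal_of_lintegral_ne_top hP.aemeasurable hPfin)
      (integrable_toReal_of_lintegral_ne_top hN.aemeasurable hNfin),
    integral_toReal hP.aemeasurable (ae_lt_top hP hPfin),
    integral_toReal hN.aemeasurable (ae_lt_top hN hNfin)]

/-- Arc-length parametrization `t ↦ s θ + t θ^⊥` of the line `⟪x, θ⟫ = s`, where `θ^⊥` is `θ`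
rotated by a right angle. -/
noncomputable def lineParam (θ : Plane) (s t : ℝ) : Plane :=
  !₂[s * θ 0 - t * θ 1, s * θ 1 + t * θ 0]

lemma sq_add_sq_of_mem_circle {θ : Plane} (hθ : ‖θ‖ = 1) : θ 0 ^ 2 + θ 1 ^ 2 = 1 := by
  have h := EuclideanSpace.real_norm_sq_eq θ
  rw [hθ, Fin.sum_univ_two] at h
  linarith

lemma plane_inner_eq (x y : Plane) : ⟪x, y⟫ = x 0 * y 0 + x 1 * y 1 := by
  simp [PiLp.inner_apply, Fin.sum_univ_two, mul_comm]

lemma isometry_lineParam {θ : Plane} (hθ : ‖θ‖ = 1) (s : ℝ) : Isometry (lineParam θ s) := by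
  refine Isometry.of_dist_eq fun t u => ?_
  have h := sq_add_sq_of_mem_circle hθ
  rw [EuclideanSpace.dist_eq, Fin.sum_univ_two, Real.dist_eq t u, ← Real.sqrt_sq_eq_abs]
  congr 1
  simp only [lineParam, Real.dist_eq, sq_abs, PiLp.toLp_apply, Matrix.cons_val_zero,
    Matrix.cons_val_one]
  linear_combination (t - u) ^ 2 * h

lemma range_lineParam {θ : Plane} (hθ : ‖θ‖ = 1) (s : ℝ) :
    Set.range (lineParam θ s) = {x : Plane | ⟪x, θ⟫ = s} := by
  have h := sq_add_sq_of_mem_circle hθ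
  ext x
  simp only [Set.mem_range, Set.mem_ofPred_eq, plane_inner_eq]
  constructor
  · rintro ⟨t, rfl⟩
    simp only [lineParam, PiLp.toLp_apply, Matrix.cons_val_zero, Matrix.cons_val_one]
    linear_combination s * h
  · intro hx
    refine ⟨x 1 * θ 0 - x 0 * θ 1, ?_⟩
    ext i
    fin_cases i
    · simp only [lineParam, PiLp.toLp_apply, Matrix.cons_val_zero, Fin.zero_eta]
      linear_combination x 0 * h - θ 0 * hx
    · simp only [lineParam, PiLp.toLp_apply, Matrix.cons_val_one, Matrix.cons_val_fin_one, Fin.mk_one]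
      linear_combination x 1 * h - θ 1 * hx

lemma lintegral_line_eq {Ω : Set Plane} (hΩ : MeasurableSet Ω) {θ : Plane} (hθ : ‖θ‖ = 1)
    (s : ℝ) (g : Plane → ℝ≥0∞) (hg : Measurable g) :
    ∫⁻ x in {x : Plane | ⟪x, θ⟫ = s} ∩ Ω, g x ∂μH[1]
      = ∫⁻ t : ℝ, Ω.indicator g (lineParam θ s t) := by
  have hi := isometry_lineParam hθ s
  rw [Set.inter_comm, ← Measure.restrict_restrict hΩ, ← lintegral_indicator hΩ,
    ← range_lineParam hθ s, ← hi.map_hausdorffMeasure (Or.inl zero_le_one),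
    lintegral_map (hg.indicator hΩ) hi.continuous.measurable, hausdorffMeasure_real]

lemma measurable_lintegral_line {Ω : Set Plane} (hΩ : MeasurableSet Ω)
    (g : (↥UnitCircle × ℝ) × Plane → ℝ≥0∞) (hg : Measurable g) :
    Measurable fun θs : ↥UnitCircle × ℝ =>
      ∫⁻ x in {x : Plane | ⟪x, (θs.1 : Plane)⟫ = θs.2} ∩ Ω, g (θs, x) ∂μH[1] := by
  have hγ : Measurable fun z : (↥UnitCircle × ℝ) × ℝ =>
      lineParam (z.1.1 : Plane) z.1.2 z.2 := by
    have : Continuous fun z : (↥UnitCircle × ℝ) × ℝ =>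
        lineParam (z.1.1 : Plane) z.1.2 z.2 := by
      unfold lineParam
      refine (PiLp.continuous_toLp 2 _).comp (continuous_pi fun i => ?_)
      fin_cases i <;> simp <;> fun_prop
    exact this.measurable
  have hind : Measurable ((Prod.snd ⁻¹' Ω).indicator g) := hg.indicator (measurable_snd hΩ)
  have hm : Measurable fun θs : ↥UnitCircle × ℝ => ∫⁻ t : ℝ,
      (Prod.snd ⁻¹' Ω).indicator g (θs, lineParam (θs.1 : Plane) θs.2 t) :=
    (hind.comp (measurable_fst.prodMk hγ)).lintegral_prod_right'
  convert hm using 2 with θs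
  exact lintegral_line_eq hΩ (mem_sphere_zero_iff_norm.1 θs.1.2) θs.2 (fun x => g (θs, x))
    (hg.comp measurable_prodMk_left)

/-- Duality formula for the undersampled Radon transform: for `v ∈ L^p(Ω)` and
`φ ∈ L^{p*}(σ)` (with `1/p + 1/p* = 1`),
`∫ φ(θ,s) (Rv)(θ,s) dσ = ∫_Ω v(x) ρ(x) (∫ φ(θ, ⟪x,θ⟫) dη(θ)) dx`,
i.e. `(R*φ)(x) = ρ(x) ∫ φ(θ, ⟪x,θ⟫) dη(θ)`. -/
theorem undersampled_radon_dual
    (Ω : Set Plane) (hΩb : Bornology.IsBounded Ω) (hΩm : MeasurableSet Ω)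
    (L : ℝ)
    (hL : ∀ θ : Plane, ‖θ‖ = 1 → ∀ s : ℝ,
      μH[1] ({x : Plane | ⟪x, θ⟫ = s} ∩ Ω) ≤ ENNReal.ofReal L)
    (σ : Measure (↥UnitCircle × ℝ))
    (η : Measure ↥UnitCircle) (hη : IsFiniteMeasure η)
    (ρ : Plane → ℝ≥0) (hρm : Measurable ρ)
    (Cρ : ℝ≥0) (hρb : ∀ x, ρ x ≤ Cρ)
    (hdis : ∀ ψ : Plane × ℝ × ↥UnitCircle → ℝ≥0∞, Measurable ψ →
      ∫⁻ θs : ↥UnitCircle × ℝ,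
        (∫⁻ x in {x : Plane | ⟪x, (θs.1 : Plane)⟫ = θs.2} ∩ Ω,
          ψ (x, θs.2, θs.1) ∂μH[1]) ∂σ
      = ∫⁻ θ : ↥UnitCircle,
          (∫⁻ x in Ω, ψ (x, ⟪x, (θ : Plane)⟫, θ) * (ρ x : ℝ≥0∞)) ∂η)
    (p q : ℝ) (hp : 1 < p) (hpq : 1 / p + 1 / q = 1)
    (v : Plane → ℝ) (hv : Measurable v)
    (hvp : ∫⁻ x in Ω, ENNReal.ofReal (|v x| ^ p) < ⊤)
    (φ : ↥UnitCircle × ℝ → ℝ) (hφ : Measurable φ)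
    (hφq : ∫⁻ θs : ↥UnitCircle × ℝ, ENNReal.ofReal (|φ θs| ^ q) ∂σ < ⊤) :
    ∫ θs : ↥UnitCircle × ℝ,
      φ θs * (∫ x in {x : Plane | ⟪x, (θs.1 : Plane)⟫ = θs.2} ∩ Ω, v x ∂μH[1]) ∂σ
    = ∫ x in Ω,
        v x * (ρ x : ℝ) * (∫ θ : ↥UnitCircle, φ (θ, ⟪x, (θ : Plane)⟫) ∂η) := by
  have hpq' : p.HolderConjugate q := by
    rw [Real.holderConjugate_iff]
    exact ⟨hp, by simpa only [one_div] using hpq⟩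
  have hinner : Measurable fun z : ↥UnitCircle × Plane => ⟪z.2, (z.1 : Plane)⟫ := by
    have : Continuous fun z : ↥UnitCircle × Plane => ⟪z.2, (z.1 : Plane)⟫ := by fun_prop
    exact this.measurable
  have hdis' : ∀ g : (↥UnitCircle × ℝ) × Plane → ℝ≥0∞, Measurable g →
      ∫⁻ θs : ↥UnitCircle × ℝ,
        (∫⁻ x in {x : Plane | ⟪x, (θs.1 : Plane)⟫ = θs.2} ∩ Ω, g (θs, x) ∂μH[1]) ∂σ
      = ∫⁻ θ : ↥UnitCircle,
          (∫⁻ x in Ω, g ((θ, ⟪x, (θ : Plane)⟫), x) * (ρ x : ℝ≥0∞)) ∂η := fun g hg =>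
    hdis (fun y => g ((y.2.2, y.2.1), y.1)) (hg.comp (by fun_prop))
  let f : (↥UnitCircle × ℝ) × Plane → ℝ := fun z => φ z.1 * v z.2
  have hf : Measurable f := (hφ.comp measurable_fst).mul (hv.comp measurable_snd)
  let f' : ↥UnitCircle × Plane → ℝ := fun z => f ((z.1, ⟪z.2, (z.1 : Plane)⟫), z.2) * (ρ z.2 : ℝ)
  have hf' : Measurable f' :=
    (hf.comp ((measurable_fst.prodMk hinner).prodMk measurable_snd)).mul
      (hρm.comp measurable_snd).coe_nnreal_real
  have hK := measurable_lintegral_line hΩm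
  have hvm : Measurable fun x => ENNReal.ofReal (|v x| ^ p) :=
    (hv.norm.pow_const p).ennreal_ofReal
  have hφm : Measurable fun θs => ENNReal.ofReal (|φ θs| ^ q) :=
    (hφ.norm.pow_const q).ennreal_ofReal
  have hvfin : ∫⁻ θs : ↥UnitCircle × ℝ,
      (∫⁻ x in {x : Plane | ⟪x, (θs.1 : Plane)⟫ = θs.2} ∩ Ω,
        ENNReal.ofReal (|v x| ^ p) ∂μH[1]) ∂σ < ∞ := by
    rw [hdis' (fun z => ENNReal.ofReal (|v z.2| ^ p)) (hvm.comp measurable_snd)]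
    calc _ ≤ ∫⁻ _ : ↥UnitCircle,
          (∫⁻ x in Ω, ENNReal.ofReal (|v x| ^ p)) * (Cρ : ℝ≥0∞) ∂η := by
          refine lintegral_mono fun θ => ?_
          rw [← lintegral_mul_const _ hvm]
          refine lintegral_mono fun x => ?_
          dsimp only
          gcongr
          exact hρb x
      _ < ∞ := by
          rw [lintegral_const]
          exact ENNReal.mul_lt_top (ENNReal.mul_lt_top hvp ENNReal.coe_lt_top)
            (measure_lt_top η _)
  have hφfin : ∫⁻ θs : ↥UnitCircle × ℝ,
      (∫⁻ _ in {x : Plane | ⟪x, (θs.1 : Plane)⟫ = θs.2} ∩ Ω,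
        ENNReal.ofReal (|φ θs| ^ q) ∂μH[1]) ∂σ < ∞ := by
    calc _ ≤ ∫⁻ θs, ENNReal.ofReal (|φ θs| ^ q) * ENNReal.ofReal L ∂σ := by
          refine lintegral_mono fun θs => ?_
          rw [setLIntegral_const]
          gcongr
          exact hL _ (mem_sphere_zero_iff_norm.1 θs.1.2) _
      _ < ∞ := by
          rw [lintegral_mul_const _ hφm]
          exact ENNReal.mul_lt_top hφq ENNReal.ofReal_lt_top
  have hyoung : ∀ z, ‖f z‖ₑ ≤ ENNReal.ofReal (|v z.2| ^ p) + ENNReal.ofReal (|φ z.1| ^ q) := by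
    intro z
    rw [Real.enorm_eq_ofReal_abs, ← ENNReal.ofReal_add (by positivity) (by positivity)]
    refine ENNReal.ofReal_le_ofReal ?_
    have h := Real.young_inequality_of_nonneg (abs_nonneg (v z.2)) (abs_nonneg (φ z.1)) hpq'
    have h1 : |v z.2| ^ p / p ≤ |v z.2| ^ p := div_le_self (by positivity) hp.le
    have h2 : |φ z.1| ^ q / q ≤ |φ z.1| ^ q := div_le_self (by positivity) hpq'.symm.lt.le
    simp only [f, abs_mul]
    linarith [mul_comm |φ z.1| |v z.2|]
  have hfin : ∫⁻ θs : ↥UnitCircle × ℝ,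
      (∫⁻ x in {x : Plane | ⟪x, (θs.1 : Plane)⟫ = θs.2} ∩ Ω, ‖f (θs, x)‖ₑ ∂μH[1]) ∂σ ≠ ∞ := by
    refine ne_top_of_le_ne_top (ENNReal.add_lt_top.2 ⟨hvfin, hφfin⟩).ne ?_
    rw [← lintegral_add_left (hK (fun z => ENNReal.ofReal (|v z.2| ^ p))
      (hvm.comp measurable_snd))]
    refine lintegral_mono fun θs => ?_
    rw [← lintegral_add_left hvm]
    exact lintegral_mono fun x => hyoung (θs, x)
  have henorm : ∀ z, ‖f' z‖ₑ = ‖f ((z.1, ⟪z.2, (z.1 : Plane)⟫), z.2)‖ₑ * (ρ z.2 : ℝ≥0∞) := by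
    intro z
    simp [f', enorm_mul]
  have hpos : ∀ z, ENNReal.ofReal (f' z)
      = ENNReal.ofReal (f ((z.1, ⟪z.2, (z.1 : Plane)⟫), z.2)) * (ρ z.2 : ℝ≥0∞) := by
    intro z
    simp [f', ENNReal.ofReal_mul' (ρ z.2).coe_nonneg]
  have hneg : ∀ z, ENNReal.ofReal (-f' z)
      = ENNReal.ofReal (-f ((z.1, ⟪z.2, (z.1 : Plane)⟫), z.2)) * (ρ z.2 : ℝ≥0∞) := by
    intro z
    simp only [f']
    rw [← neg_mul, ENNReal.ofReal_mul' (ρ z.2).coe_nonneg, ENNReal.ofReal_coe_nnreal]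
  have hfin' : ∫⁻ θ : ↥UnitCircle, (∫⁻ x in Ω, ‖f' (θ, x)‖ₑ) ∂η ≠ ∞ := by
    rw [hdis' (fun z => ‖f z‖ₑ) hf.enorm] at hfin
    simpa only [henorm] using hfin
  have hint : Integrable f' (η.prod (volume.restrict Ω)) := by
    refine ⟨hf'.aestronglyMeasurable, ?_⟩
    rw [HasFiniteIntegral, lintegral_prod _ hf'.enorm.aemeasurable]
    exact hfin'.lt_top
  calc _ = ∫ θs : ↥UnitCircle × ℝ,
        (∫ x in {x : Plane | ⟪x, (θs.1 : Plane)⟫ = θs.2} ∩ Ω, f (θs, x) ∂μH[1]) ∂σ := by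
        simp only [f, integral_const_mul]
    _ = ∫ θ : ↥UnitCircle, (∫ x in Ω, f' (θ, x)) ∂η := by
        rw [integral_integral_eq_lintegral_sub σ _ hK f hf hfin,
          integral_integral_eq_lintegral_sub η (fun _ => volume.restrict Ω)
            (fun g hg => hg.lintegral_prod_right') f' hf' hfin',
          hdis' (fun z => ENNReal.ofReal (f z)) hf.ennreal_ofReal,
          hdis' (fun z => ENNReal.ofReal (-f z)) hf.neg.ennreal_ofReal]
        simp only [hpos, hneg]
    _ = ∫ x in Ω, (∫ θ : ↥UnitCircle, f' (θ, x) ∂η) := integral_integral_swap hint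
    _ = _ := by
        congr 1 with x
        rw [← integral_const_mul]
        congr 1 with θ
        simp only [f', f]
        ring
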